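/- Let r ≥ 2 and let B : ℤ^r × ℤ^r → ℤ be a symmetric bilinear form, extended ℝ-bilinearly to ℝ^r, such that B(v,v) > 0 for some v ∈ ℤ^r. Let ω' ∈ ℝ^r and let α, β be real numbers with β > 0 and α > −B(ω',ω')/(2β). Then there exist a sequence (A_k) of positive rational numbers, a sequence (τ_k) of primitive vectors in ℤ^r, and a sequence (i_k) of integers such that, setting ω'_k := (1/A_k)·τ_k ∈ ℝ^r, the following hold: (a) the sequence ω'_k converges to ω'; (b) B(ω'_k, ω'_k) > B(ω', ω') for every k; (c) α > i_k/A_k > −B(ω',ω')/(2β) for every k. -/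

import Mathlib

/-- A vector `τ ∈ ℤ^r` is primitive (indivisible) if whenever `τ = d • x` with
`d ∈ ℤ` and `x ∈ ℤ^r`, then `d = 1` or `d = −1`. -/
def IsPrimitiveVec {r : ℕ} (τ : Fin r → ℤ) : Prop :=
  ∀ (d : ℤ) (x : Fin r → ℤ), τ = d • x → d = 1 ∨ d = -1

/-!
Let `v` be a vector on which the quadratic form is positive. Moving `ω'` slightly along `v` or `-v`,
whichever has nonnegative polar product with `ω'`, increases the form, so `ω'` lies in the closure
of the open set `U` where the form exceeds its value at `ω'`. Points `τ / A` with `τ` primitive and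
`A` arbitrarily large are dense in `ℝ^r`: for an integral vector `e` with `e j ≠ 0` and `m` a large
multiple of `e j`, adding `1` to another coordinate of `m • e` makes it primitive and hardly changes
its direction. Hence `ω'` is a limit of such points of `U`. Once `A > 1 / (α - l)`, some multiple of
`1 / A` lies strictly between `l` and `α`.
-/

open Filter Topology

theorem isPrimitiveVec_smul_add_single {r : ℕ} {i j : Fin r} (hij : i ≠ j) {e : Fin r → ℤ} {m : ℤ}
    (hm : e j ∣ m) : IsPrimitiveVec (m • e + Pi.single i 1) := by
  intro d x hx
  have hdi : d ∣ m * e i + 1 := ⟨x i, by simpa using congrFun hx i⟩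
  have hdj : d ∣ m * e j := ⟨x j, by simpa [hij.symm] using congrFun hx j⟩
  have coprime_m : IsCoprime (m * e i + 1) m := ⟨1, -e i, by ring⟩
  have coprime_mul : IsCoprime (m * e i + 1) (m * e j) :=
    coprime_m.mul_right (coprime_m.of_isCoprime_of_dvd_right hm)
  exact Int.isUnit_iff.mp (coprime_mul.isUnit_of_dvd' hdi hdj)

theorem dense_setOf_int_div_nat (ι : Type*) [Finite ι] :
    Dense {x : ι → ℝ | ∃ (n : ℕ) (e : ι → ℤ), 0 < n ∧ x = fun j => (e j : ℝ) / n} := by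
  cases nonempty_fintype ι
  refine Metric.dense_iff.mpr fun u ε hε => ?_
  obtain ⟨n, hn⟩ := exists_nat_gt ε⁻¹
  have hn_pos : 0 < n := by exact_mod_cast (inv_pos.mpr hε).trans hn
  choose e he_gt he_lt using fun j =>
    exists_div_btwn (lt_add_of_pos_right (u j) hε) (by simpa using hn)
  refine ⟨fun j => (e j : ℝ) / n, (dist_pi_lt_iff hε).mpr fun j => ?_, n, e, hn_pos, rfl⟩
  rw [Real.dist_eq, abs_lt]
  constructor <;> linarith [he_gt j, he_lt j]

theorem dense_setOf_apply_ne_zero {ι : Type*} (j : ι) : Dense {x : ι → ℝ | x j ≠ 0} :=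
  (dense_compl_singleton (0 : ℝ)).preimage (isOpenMap_eval j)

theorem tendsto_smul_add_single_div {ι : Type*} [DecidableEq ι] (i : ι) (e : ι → ℤ) {n : ℕ}
    (hn : 0 < n) :
    Tendsto
      (fun m : ℕ => fun j => (((m : ℤ) • e + Pi.single i 1 : ι → ℤ) j : ℝ) / ((m * n : ℕ) : ℝ))
      atTop (𝓝 fun j => (e j : ℝ) / n) := by
  refine tendsto_pi_nhds.mpr fun j => ?_
  have hmn : Tendsto (fun m : ℕ => ((m * n : ℕ) : ℝ)) atTop atTop :=
    tendsto_natCast_atTop_atTop.comp (tendsto_id.atTop_mul_const' hn)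
  have hsum := (tendsto_const_nhds (x := (e j : ℝ) / n)).add
    (hmn.const_div_atTop (((Pi.single i 1 : ι → ℤ) j : ℤ) : ℝ))
  rw [add_zero] at hsum
  refine hsum.congr' ?_
  filter_upwards [eventually_gt_atTop 0] with m hm
  simp only [Pi.add_apply, Pi.smul_apply, smul_eq_mul]
  push_cast
  field_simp

theorem dense_setOf_primitiveVec_div {r : ℕ} (hr : 2 ≤ r) (N : ℕ) :
    Dense {x : Fin r → ℝ | ∃ (A : ℕ) (τ : Fin r → ℤ),
      N < A ∧ IsPrimitiveVec τ ∧ x = fun j => (τ j : ℝ) / A} := by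
  have := Fin.nontrivial_iff_two_le.mpr hr
  obtain ⟨i, j, hij⟩ := exists_pair_ne (Fin r)
  have hopen : IsOpen {x : Fin r → ℝ | x j ≠ 0} :=
    isOpen_ne_fun (continuous_apply j) continuous_const
  have hdense := (dense_setOf_int_div_nat (Fin r)).inter_of_isOpen_right
    (dense_setOf_apply_ne_zero j) hopen
  refine dense_closure.mp (hdense.mono ?_)
  rintro _ ⟨⟨n, e, hn, rfl⟩, hej⟩
  have he_pos : 0 < (e j).natAbs := by
    refine Int.natAbs_pos.mpr fun h => hej ?_
    simp [h]
  have hmul : Tendsto (fun k : ℕ => k * (e j).natAbs) atTop atTop :=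
    tendsto_id.atTop_mul_const' he_pos
  refine mem_closure_of_tendsto ((tendsto_smul_add_single_div i e hn).comp hmul) ?_
  filter_upwards [eventually_gt_atTop N] with k hk
  refine ⟨k * (e j).natAbs * n, _, ?_, isPrimitiveVec_smul_add_single hij ?_, rfl⟩
  · calc N < k := hk
      _ ≤ k * (e j).natAbs := Nat.le_mul_of_pos_right k he_pos
      _ ≤ k * (e j).natAbs * n := Nat.le_mul_of_pos_right _ hn
  · rw [Nat.cast_mul]
    exact (Int.dvd_natAbs_self).mul_left _

theorem exists_seq_primitiveVec_div {r : ℕ} (hr : 2 ≤ r) {U : Set (Fin r → ℝ)} (hU : IsOpen U)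
    {ω : Fin r → ℝ} (hω : ω ∈ closure U) (N : ℕ) :
    ∃ (A : ℕ → ℕ) (τ : ℕ → Fin r → ℤ), (∀ k, N < A k) ∧ (∀ k, IsPrimitiveVec (τ k)) ∧
      Tendsto (fun k => fun j => (τ k j : ℝ) / A k) atTop (𝓝 ω) ∧
      ∀ k, (fun j => (τ k j : ℝ) / A k) ∈ U := by
  have hclosure := closure_minimal
    ((dense_setOf_primitiveVec_div hr N).open_subset_closure_inter hU) isClosed_closure hω
  obtain ⟨x, hx, hlim⟩ := mem_closure_iff_seq_limit.mp hclosure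
  choose hxU A τ hA hτ hxτ using hx
  obtain rfl : x = fun k j => (τ k j : ℝ) / A k := funext hxτ
  exact ⟨A, τ, hA, hτ, hlim, hxU⟩

theorem continuous_quadraticForm {E : Type*} [NormedAddCommGroup E] [NormedSpace ℝ E]
    [FiniteDimensional ℝ E] (Q : QuadraticForm ℝ E) : Continuous Q := by
  let B := (QuadraticMap.associated Q).toContinuousBilinearMap
  have hB : Q = fun x => B x x := funext fun x => (QuadraticMap.associated_eq_self_apply ℝ Q x).symm
  rw [hB]
  exact B.continuous.clm_apply continuous_id

theorem mem_closure_setOf_lt_quadraticForm {E : Type*} [AddCommGroup E] [Module ℝ E]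
    [TopologicalSpace E] [ContinuousAdd E] [ContinuousSMul ℝ E] {Q : QuadraticForm ℝ E}
    (hpos : ∃ v, 0 < Q v) (ω : E) :
    ω ∈ closure {x | Q ω < Q x} := by
  obtain ⟨v, hv, hpolar⟩ : ∃ v, 0 < Q v ∧ 0 ≤ QuadraticMap.polar Q ω v := by
    obtain ⟨v, hv⟩ := hpos
    rcases le_total 0 (QuadraticMap.polar Q ω v) with h | h
    · exact ⟨v, hv, h⟩
    · exact ⟨-v, by simpa using hv, by simpa using h⟩
  have hray : Tendsto (fun t : ℝ => ω + t • v) (𝓝[>] 0) (𝓝 ω) := by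
    have hcont : Continuous fun t : ℝ => ω + t • v := by fun_prop
    simpa using (hcont.tendsto 0).mono_left nhdsWithin_le_nhds
  refine mem_closure_of_tendsto hray ?_
  filter_upwards [self_mem_nhdsWithin] with t (ht : 0 < t)
  calc Q ω < Q ω + t * t * Q v + t * QuadraticMap.polar Q ω v := by
        have := mul_pos (mul_pos ht ht) hv
        have := mul_nonneg ht.le hpolar
        linarith
    _ = Q (ω + t • v) := by
        simp only [QuadraticMap.map_add Q, QuadraticMap.map_smul, QuadraticMap.polar_smul_right,
          smul_eq_mul]

theorem technical_lemma_general {r : ℕ} (hr : 2 ≤ r) (Q : QuadraticForm ℝ (Fin r → ℝ))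
    (hpos : ∃ v, 0 < Q v) (ω' : Fin r → ℝ) {l α : ℝ} (hα : l < α) :
    ∃ (A : ℕ → ℕ) (τ : ℕ → Fin r → ℤ) (i : ℕ → ℤ),
      (∀ k, 0 < A k) ∧ (∀ k, IsPrimitiveVec (τ k)) ∧
      Tendsto (fun k => fun j => (τ k j : ℝ) / A k) atTop (𝓝 ω') ∧
      (∀ k, Q ω' < Q fun j => (τ k j : ℝ) / A k) ∧
      ∀ k, (i k : ℝ) / A k < α ∧ l < (i k : ℝ) / A k := by
  obtain ⟨N, hN⟩ := exists_nat_gt (α - l)⁻¹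
  have hopen : IsOpen {x | Q ω' < Q x} := isOpen_lt continuous_const (continuous_quadraticForm Q)
  obtain ⟨A, τ, hA, hτ, hlim, hQ⟩ :=
    exists_seq_primitiveVec_div hr hopen (mem_closure_setOf_lt_quadraticForm hpos ω') N
  choose i hl hiα using fun k => exists_div_btwn hα (hN.trans (Nat.cast_lt.mpr (hA k)))
  exact ⟨A, τ, i, fun k => Nat.zero_lt_of_lt (hA k), hτ, hlim, hQ, fun k => ⟨hiα k, hl k⟩⟩

/-- The technical lemma: for a symmetric integer-valued bilinear form `B` on
`ℤ^r` (`r ≥ 2`), extended `ℝ`-bilinearly to `ℝ^r`, taking a positive value on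
some integral vector, and reals `β > 0`, `α > −B(ω',ω')/(2β)`, there are
positive rationals `A_k`, primitive integral vectors `τ_k` and integers `i_k`
such that `ω'_k := (1/A_k)·τ_k → ω'`, `B(ω'_k,ω'_k) > B(ω',ω')` for all `k`,
and `α > i_k/A_k > −B(ω',ω')/(2β)` for all `k`. -/
theorem technical_lemma (r : ℕ) (hr : 2 ≤ r)
    (B : (Fin r → ℝ) →ₗ[ℝ] (Fin r → ℝ) →ₗ[ℝ] ℝ)
    (hsymm : ∀ x y, B x y = B y x)
    (hint : ∀ x y : Fin r → ℤ,
      ∃ n : ℤ, B (fun j => (x j : ℝ)) (fun j => (y j : ℝ)) = (n : ℝ))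
    (hpos : ∃ v : Fin r → ℤ, B (fun j => (v j : ℝ)) (fun j => (v j : ℝ)) > 0)
    (ω' : Fin r → ℝ) (α β : ℝ) (hβ : β > 0)
    (hα : α > -B ω' ω' / (2 * β)) :
    ∃ (A : ℕ → ℚ) (τ : ℕ → Fin r → ℤ) (i : ℕ → ℤ),
      (∀ k, 0 < A k) ∧ (∀ k, IsPrimitiveVec (τ k)) ∧
      (Filter.Tendsto
        (fun k => fun j => ((τ k j : ℝ) / (A k : ℝ))) Filter.atTop (nhds ω')) ∧
      (∀ k, B (fun j => ((τ k j : ℝ) / (A k : ℝ)))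
              (fun j => ((τ k j : ℝ) / (A k : ℝ))) > B ω' ω') ∧
      (∀ k, α > (i k : ℝ) / (A k : ℝ) ∧
            (i k : ℝ) / (A k : ℝ) > -B ω' ω' / (2 * β)) := by
  obtain ⟨A, τ, i, h⟩ := technical_lemma_general hr
    (LinearMap.BilinMap.toQuadraticMap B) (hpos.elim fun _ hv => ⟨_, hv⟩) ω' hα
  exact ⟨fun k => A k, τ, i, by simpa using h⟩
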